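/- Let G be a group with word-length function L and let k ∈ ℕ. If f : G → ℂ satisfies Σ_{g ∈ G} |f(g)|·L(g)^k < ∞ (in particular if ν₁,ₖ(f) < ∞), then the linear map determined on basis vectors by δ_h ↦ Σ_{g ∈ G} f(g)·(L(g·h) − L(h))^k·δ_{g·h} extends to a bounded operator on ℓ²(G) with operator norm at most Σ_{g ∈ G} |f(g)|·L(g)^k ≤ ν₁,ₖ(f). -/

import Mathlib

/-!
The operator is the norm-convergent sum over `g` of the weighted shifts
`T_g : δ_h ↦ f g * (L (g * h) - L h) ^ k • δ_{g * h}`. Since `|L (g * h) - L h| ≤ L g`, the weights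
of `T_g` are bounded by `‖f g‖ * L g ^ k`, and a permutation of the basis followed by a bounded
weight has norm at most the bound of the weight (`exists_weightedShift`). Hence `∑ g, T_g` converges
absolutely in operator norm, and its norm is at most `∑ g, ‖f g‖ * L g ^ k`.
-/

/-- The weighted composition operator `x ↦ (u ↦ w u * x (e u))` on `ℓ²(G)`, for a permutation `e`
and a weight `w` bounded by `C`, has norm at most `C`. -/
lemma exists_weightedShift {G : Type*} (e : G ≃ G) (w : G → ℂ) (C : ℝ) (hC : 0 ≤ C)
    (hw : ∀ u, ‖w u‖ ≤ C) :
    ∃ T : (lp (fun _ : G => ℂ) 2) →L[ℂ] (lp (fun _ : G => ℂ) 2),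
      ‖T‖ ≤ C ∧ ∀ (x : lp (fun _ : G => ℂ) 2) (u : G), T x u = w u * x (e u) := by
  have h2 : 0 < (2 : ENNReal).toReal := by norm_num
  have hbound : ∀ (x : lp (fun _ : G => ℂ) 2) (u : G),
      ‖w u * x (e u)‖ ^ (2 : ENNReal).toReal
        ≤ C ^ (2 : ENNReal).toReal * ‖x (e u)‖ ^ (2 : ENNReal).toReal := by
    intro x u
    rw [norm_mul, ← Real.mul_rpow hC (norm_nonneg _)]
    have := hw u
    gcongr
  have hsum : ∀ x : lp (fun _ : G => ℂ) 2, HasSum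
      (fun u => C ^ (2 : ENNReal).toReal * ‖x (e u)‖ ^ (2 : ENNReal).toReal)
      (C ^ (2 : ENNReal).toReal * ‖x‖ ^ (2 : ENNReal).toReal) := fun x =>
    ((e.hasSum_iff (f := fun u => ‖x u‖ ^ (2 : ENNReal).toReal)).2
      (lp.hasSum_norm h2 x)).mul_left _
  have hmem : ∀ x : lp (fun _ : G => ℂ) 2,
      Memℓp (E := fun _ : G => ℂ) (fun u => w u * x (e u)) 2 := fun x =>
    memℓp_gen ((hsum x).summable.of_nonneg_of_le (fun u => by positivity) (hbound x))
  let T₀ : (lp (fun _ : G => ℂ) 2) →ₗ[ℂ] (lp (fun _ : G => ℂ) 2) :=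
    { toFun := fun x => ⟨fun u => w u * x (e u), hmem x⟩
      map_add' := fun x y => by
        ext u
        exact mul_add _ _ _
      map_smul' := fun c x => by
        ext u
        exact mul_left_comm _ _ _ }
  have hT₀ : ∀ x, ‖T₀ x‖ ≤ C * ‖x‖ := by
    intro x
    refine lp.norm_le_of_tsum_le h2 (by positivity) ?_
    rw [Real.mul_rpow hC (norm_nonneg _), ← (hsum x).tsum_eq]
    exact Summable.tsum_le_tsum (hbound x)
      ((hsum x).summable.of_nonneg_of_le (fun u => by positivity) (hbound x)) (hsum x).summable
  exact ⟨T₀.mkContinuous C hT₀, T₀.mkContinuous_norm_le hC hT₀, fun x u => rfl⟩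


/-- **`ℓ¹`-rapid-decay functions give bounded iterated commutators on `ℓ²(G)`.**
If `∑ g, ‖f g‖ * L g ^ k < ∞` (in particular if `ν₁,ₖ(f) < ∞`), then the linear map
`δ_h ↦ ∑ g, f g * (L (g·h) − L h)^k • δ_{g·h}` extends to a bounded operator on `ℓ²(G)`
with norm at most `∑ g, ‖f g‖ * L g ^ k`, which in turn is at most
`ν₁,ₖ(f) = ∑ h, ‖f h‖ * (1 + L h)^k` whenever the latter sum converges. -/
theorem commutator_kernel_bounded_on_l2 {G : Type*} [Group G] [DecidableEq G] (L : G → ℝ)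
    (hL_nonneg : ∀ g : G, 0 ≤ L g) (hL_one : L 1 = 0)
    (hL_mul : ∀ g h : G, L (g * h) ≤ L g + L h)
    (hL_inv : ∀ g : G, L g⁻¹ = L g)
    (k : ℕ) (f : G → ℂ)
    (hf : Summable fun g : G => ‖f g‖ * L g ^ k) :
    ∃ T : (lp (fun _ : G => ℂ) 2) →L[ℂ] (lp (fun _ : G => ℂ) 2),
      ‖T‖ ≤ (∑' g : G, ‖f g‖ * L g ^ k) ∧
      (∀ h : G, T (lp.single 2 h (1 : ℂ)) =
        ∑' g : G, (f g * (((L (g * h) - L h) ^ k : ℝ) : ℂ)) • lp.single 2 (g * h) (1 : ℂ)) ∧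
      (Summable (fun h : G => ‖f h‖ * (1 + L h) ^ k) →
        (∑' g : G, ‖f g‖ * L g ^ k) ≤ ∑' h : G, ‖f h‖ * (1 + L h) ^ k) := by
  have habs : ∀ g h : G, |L (g * h) - L h| ≤ L g := by
    intro g h
    rw [abs_le]
    have h1 := hL_mul g h
    have h2 := hL_mul g⁻¹ (g * h)
    rw [inv_mul_cancel_left, hL_inv] at h2
    constructor <;> linarith
  have hex : ∀ g : G, ∃ T : (lp (fun _ : G => ℂ) 2) →L[ℂ] (lp (fun _ : G => ℂ) 2),
      ‖T‖ ≤ ‖f g‖ * L g ^ k ∧ ∀ (x : lp (fun _ : G => ℂ) 2) (u : G),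
        T x u = (f g * (((L u - L (g⁻¹ * u)) ^ k : ℝ) : ℂ)) * x (g⁻¹ * u) := by
    intro g
    refine exists_weightedShift (Equiv.mulLeft g⁻¹) _ _
      (mul_nonneg (norm_nonneg _) (pow_nonneg (hL_nonneg g) k)) fun u => ?_
    rw [norm_mul, Complex.norm_real, Real.norm_eq_abs, abs_pow]
    have := habs g (g⁻¹ * u)
    rw [mul_inv_cancel_left] at this
    gcongr
  choose S hS_norm hS_apply using hex
  have hS : Summable S := hf.of_norm_bounded hS_norm
  refine ⟨∑' g, S g, tsum_of_norm_bounded hf.hasSum hS_norm, fun h => ?_, fun hν => ?_⟩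
  · refine ((ContinuousLinearMap.apply ℂ (lp (fun _ : G => ℂ) 2)
      (lp.single 2 h (1 : ℂ) : lp (fun _ : G => ℂ) 2)).map_tsum hS).trans ?_
    refine tsum_congr fun g => ?_
    rw [ContinuousLinearMap.apply_apply]
    ext u
    rw [hS_apply, lp.coeFn_smul, Pi.smul_apply, smul_eq_mul]
    by_cases hu : u = g * h
    · subst hu
      simp
    · have hu' : g⁻¹ * u ≠ h := fun H => hu (by rw [← H, mul_inv_cancel_left])
      simp [lp.single_apply, hu, hu']
  · refine hf.tsum_le_tsum (fun g => ?_) hν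
    have := hL_nonneg g
    gcongr
    linarith
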